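/- Let λ0 ∈ ℝ, let g be an exchangeable prior, and let d be a pseudo symmetric design with c_{d22} > 0 and q_d(x_d) + (t−2) q_d(λ0) > 0. Then d is T_{g,λ0}-optimal if and only if max_{s∈S} [ (q_s(x_d) + (t−2) q_s(λ0)) / (q_d(x_d) + (t−2) q_d(λ0)) ] = 1. Moreover, in that case every sequence s with p_s > 0 attains this maximum. -/

import Mathlib

open Matrix MeasureTheory
open scoped Classical

noncomputable section

/-- A treatment sequence: assigns a treatment in `Fin t` to each period in `Fin p`. -/
abbrev TrtSeq (p t : ℕ) := Fin p → Fin t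

/-- Treatment/period incidence matrix `T_s`. -/
def Tmat {p t : ℕ} (s : TrtSeq p t) : Matrix (Fin p) (Fin t) ℝ :=
  Matrix.of fun k i => if s k = i then 1 else 0

/-- Carryover incidence matrix `F_s`: first row zero, row `k` records the treatment
in period `k-1`. -/
def Fmat {p t : ℕ} (s : TrtSeq p t) : Matrix (Fin p) (Fin t) ℝ :=
  Matrix.of fun k i =>
    if (k : ℕ) = 0 then 0
    else if s ⟨(k : ℕ) - 1, Nat.lt_of_le_of_lt (Nat.sub_le _ _) k.isLt⟩ = i then 1 else 0

/-- The all-ones `m × m` matrix `J_m`. -/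
def Jmat (m : ℕ) : Matrix (Fin m) (Fin m) ℝ := Matrix.of fun _ _ => 1

/-- `B_t = I_t - J_t / t`. -/
def Bmat (t : ℕ) : Matrix (Fin t) (Fin t) ℝ := 1 - ((t : ℝ))⁻¹ • Jmat t

/-- `B̃ = Σ⁻¹ - Σ⁻¹ J_p Σ⁻¹ / (1_p' Σ⁻¹ 1_p)`. -/
def Btil {p : ℕ} (S : Matrix (Fin p) (Fin p) ℝ) : Matrix (Fin p) (Fin p) ℝ :=
  S⁻¹ - (((fun _ => (1 : ℝ)) : Fin p → ℝ) ⬝ᵥ (S⁻¹ *ᵥ fun _ => (1 : ℝ)))⁻¹ •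
    (S⁻¹ * Jmat p * S⁻¹)

/-- `G_1(s) = T_s`, `G_2(s) = F_s`. -/
def Gmat {p t : ℕ} (i : Fin 2) (s : TrtSeq p t) : Matrix (Fin p) (Fin t) ℝ :=
  if i = 0 then Tmat s else Fmat s

/-- An approximate design: nonnegative weights summing to one. -/
def IsDesign {p t : ℕ} (w : TrtSeq p t → ℝ) : Prop :=
  (∀ s, 0 ≤ w s) ∧ ∑ s : TrtSeq p t, w s = 1

/-- `Ĉ_{sij} = B_t G_i(s)' B̃ G_j(s) B_t`. -/
def Chat {p t : ℕ} (S : Matrix (Fin p) (Fin p) ℝ) (s : TrtSeq p t) (i j : Fin 2) :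
    Matrix (Fin t) (Fin t) ℝ :=
  Bmat t * (Gmat i s)ᵀ * Btil S * Gmat j s * Bmat t

/-- `c_{sij} = tr Ĉ_{sij}`. -/
def cseq {p t : ℕ} (S : Matrix (Fin p) (Fin p) ℝ) (s : TrtSeq p t) (i j : Fin 2) : ℝ :=
  (Chat S s i j).trace

/-- `Ĉ_{dij} = n ∑_s p_s Ĉ_{sij}`. -/
def ChatD {p t : ℕ} (n : ℕ) (S : Matrix (Fin p) (Fin p) ℝ) (w : TrtSeq p t → ℝ)
    (i j : Fin 2) : Matrix (Fin t) (Fin t) ℝ :=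
  (n : ℝ) • ∑ s : TrtSeq p t, w s • Chat S s i j

/-- `C_{dij} = Ĉ_{dij} - n (∑_s p_s G_i(s) B_t)' B̃ (∑_s p_s G_j(s) B_t)`. -/
def CD {p t : ℕ} (n : ℕ) (S : Matrix (Fin p) (Fin p) ℝ) (w : TrtSeq p t → ℝ)
    (i j : Fin 2) : Matrix (Fin t) (Fin t) ℝ :=
  ChatD n S w i j -
    (n : ℝ) • ((∑ s : TrtSeq p t, w s • (Gmat i s * Bmat t))ᵀ * Btil S *
      (∑ s : TrtSeq p t, w s • (Gmat j s * Bmat t)))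

/-- `c_{dij} = tr Ĉ_{dij} = n ∑_s p_s c_{sij}`. -/
def cD {p t : ℕ} (n : ℕ) (S : Matrix (Fin p) (Fin p) ℝ) (w : TrtSeq p t → ℝ)
    (i j : Fin 2) : ℝ :=
  (ChatD n S w i j).trace

/-- Fisher information matrix `C_{d,τ0,λ0}` for the direct treatment effects under the
proportional model. -/
def CInfo {p t : ℕ} (n : ℕ) (S : Matrix (Fin p) (Fin p) ℝ) (w : TrtSeq p t → ℝ)
    (τ0 : Fin t → ℝ) (l0 : ℝ) : Matrix (Fin t) (Fin t) ℝ :=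
  CD n S w 0 0 + l0 • (CD n S w 0 1 + CD n S w 1 0) + (l0 ^ 2) • CD n S w 1 1 -
    (τ0 ⬝ᵥ (CD n S w 1 1 *ᵥ τ0))⁻¹ •
      ((CD n S w 0 1 + l0 • CD n S w 1 1) * vecMulVec τ0 τ0 *
        (CD n S w 1 0 + l0 • CD n S w 1 1))

/-- Permutation matrix `S_σ` with `(S_σ)_{j,i} = 1` iff `i = σ j`. -/
def Smat {t : ℕ} (σ : Equiv.Perm (Fin t)) : Matrix (Fin t) (Fin t) ℝ :=
  Matrix.of fun j i => if i = σ j then 1 else 0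

/-- The relabelled sequence `σ ∘ s`. -/
def permSeq {p t : ℕ} (σ : Equiv.Perm (Fin t)) (s : TrtSeq p t) : TrtSeq p t := fun k => σ (s k)

/-- The design `σ d`, with weights `(σd)_s = p_{σ⁻¹ ∘ s}`. -/
def permDesign {p t : ℕ} (σ : Equiv.Perm (Fin t)) (w : TrtSeq p t → ℝ) : TrtSeq p t → ℝ :=
  fun s => w (permSeq σ⁻¹ s)

/-- A design is symmetric if its weights are invariant under treatment relabelling. -/
def IsSymmetricDesign {p t : ℕ} (w : TrtSeq p t → ℝ) : Prop :=
  ∀ (σ : Equiv.Perm (Fin t)) (s : TrtSeq p t), w (permSeq σ s) = w s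

/-- The symmetrized design `d*` with weights `p*_s = (1/t!) ∑_σ p_{σ⁻¹ ∘ s}`. -/
def symmetrize {p t : ℕ} (w : TrtSeq p t → ℝ) : TrtSeq p t → ℝ :=
  fun s => ((Nat.factorial t : ℝ))⁻¹ * ∑ σ : Equiv.Perm (Fin t), permDesign σ w s

/-- `q_s(x) = c_{s11} + 2 c_{s12} x + c_{s22} x²`. -/
def qSeq {p t : ℕ} (S : Matrix (Fin p) (Fin p) ℝ) (s : TrtSeq p t) (x : ℝ) : ℝ :=
  cseq S s 0 0 + 2 * cseq S s 0 1 * x + cseq S s 1 1 * x ^ 2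

/-- `q(x) = max_{s ∈ S} q_s(x)`. -/
def qMax (p t : ℕ) (S : Matrix (Fin p) (Fin p) ℝ) (x : ℝ) : ℝ :=
  sSup (Set.range fun s : TrtSeq p t => qSeq S s x)

/-- `y* = inf_x q(x)`. -/
def yStar (p t : ℕ) (S : Matrix (Fin p) (Fin p) ℝ) : ℝ := ⨅ x : ℝ, qMax p t S x

/-- `q_d(x) = ∑_s p_s q_s(x)`. -/
def qD {p t : ℕ} (S : Matrix (Fin p) (Fin p) ℝ) (w : TrtSeq p t → ℝ) (x : ℝ) : ℝ :=
  ∑ s : TrtSeq p t, w s * qSeq S s x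

/-- `x_d = -c_{d12}/c_{d22}`. -/
def xD {p t : ℕ} (n : ℕ) (S : Matrix (Fin p) (Fin p) ℝ) (w : TrtSeq p t → ℝ) : ℝ :=
  -(cD n S w 0 1) / cD n S w 1 1

/-- An exchangeable prior: a probability measure on `{τ : 1'τ = 0, τ ≠ 0}` that is
invariant under all coordinate permutations of `ℝ^t`. -/
def IsExchangeablePrior {t : ℕ} (g : Measure (Fin t → ℝ)) : Prop :=
  IsProbabilityMeasure g ∧
    g {τ : Fin t → ℝ | ¬((∑ i, τ i) = 0 ∧ τ ≠ 0)} = 0 ∧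
    ∀ σ : Equiv.Perm (Fin t), Measure.map (fun τ i => τ (σ i)) g = g

/-- `m_d(τ0) = min {ℓ' C_{d,τ0,λ0} ℓ : 1'ℓ = 0, ℓ'ℓ = 1}`. -/
def mD {p t : ℕ} (n : ℕ) (S : Matrix (Fin p) (Fin p) ℝ) (w : TrtSeq p t → ℝ) (l0 : ℝ)
    (τ0 : Fin t → ℝ) : ℝ :=
  sInf {v : ℝ | ∃ l : Fin t → ℝ, (∑ i, l i) = 0 ∧ l ⬝ᵥ l = 1 ∧
    v = l ⬝ᵥ (CInfo n S w τ0 l0 *ᵥ l)}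

/-- The E-criterion value `E_{g,λ0}(d) = ∫ m_d(τ0) g(dτ0)`. -/
def Ecrit {p t : ℕ} (n : ℕ) (S : Matrix (Fin p) (Fin p) ℝ) (g : Measure (Fin t → ℝ))
    (l0 : ℝ) (w : TrtSeq p t → ℝ) : ℝ :=
  ∫ τ0, mD n S w l0 τ0 ∂g

/-- Competing designs for E-optimality: designs with a.e. positive `τ0' C_{d22} τ0`
and `g`-integrable `m_d`. -/
def EAdmissible {p t : ℕ} (n : ℕ) (S : Matrix (Fin p) (Fin p) ℝ) (g : Measure (Fin t → ℝ))
    (l0 : ℝ) (w : TrtSeq p t → ℝ) : Prop :=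
  IsDesign w ∧ (∀ᵐ τ0 ∂g, 0 < τ0 ⬝ᵥ (CD n S w 1 1 *ᵥ τ0)) ∧
    Integrable (mD n S w l0) g

/-- `d` is `E_{g,λ0}`-optimal. -/
def EOptimal {p t : ℕ} (n : ℕ) (S : Matrix (Fin p) (Fin p) ℝ) (g : Measure (Fin t → ℝ))
    (l0 : ℝ) (w : TrtSeq p t → ℝ) : Prop :=
  ∀ w' : TrtSeq p t → ℝ, EAdmissible n S g l0 w' → Ecrit n S g l0 w' ≤ Ecrit n S g l0 w

/-- A pseudo symmetric design: treatments equireplicated in each period,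
and all `C_{dij}` completely symmetric. -/
def IsPseudoSymmetric {p t : ℕ} (n : ℕ) (S : Matrix (Fin p) (Fin p) ℝ)
    (w : TrtSeq p t → ℝ) : Prop :=
  (∀ (k : Fin p) (i : Fin t),
    (∑ s ∈ Finset.univ.filter fun s : TrtSeq p t => s k = i, w s) = 1 / (t : ℝ)) ∧
  ∀ i j : Fin 2, ∃ a b : ℝ, CD n S w i j = a • (1 : Matrix (Fin t) (Fin t) ℝ) + b • Jmat t

/-- Eigenvalues of a (Hermitian) matrix sorted increasingly with multiplicity. -/
def sortedEigs {t : ℕ} (C : Matrix (Fin t) (Fin t) ℝ) : Fin t → ℝ :=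
  if h : C.IsHermitian then (fun i => h.eigenvalues (Tuple.sort h.eigenvalues i))
  else fun _ => 0

/-- `Φ_D(C) = (∏_{i=1}^{t-1} a_i)^{1/(t-1)}` (eigenvalues sorted increasingly). -/
def PhiD {t : ℕ} (C : Matrix (Fin t) (Fin t) ℝ) : ℝ :=
  (∏ i ∈ Finset.univ.filter fun i : Fin t => (i : ℕ) ≠ 0, sortedEigs C i) ^ (((t : ℝ) - 1)⁻¹)

/-- `Φ_A(C) = (t-1)(∑_{i=1}^{t-1} a_i⁻¹)⁻¹` if `a_1 > 0`, else `0`. -/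
def PhiA {t : ℕ} (C : Matrix (Fin t) (Fin t) ℝ) : ℝ :=
  if ∀ i : Fin t, (i : ℕ) ≠ 0 → 0 < sortedEigs C i then
    ((t : ℝ) - 1) *
      (∑ i ∈ Finset.univ.filter fun i : Fin t => (i : ℕ) ≠ 0, (sortedEigs C i)⁻¹)⁻¹
  else 0

/-- `Φ_T(C) = tr(C)/(t-1)`. -/
def PhiT {t : ℕ} (C : Matrix (Fin t) (Fin t) ℝ) : ℝ := C.trace / ((t : ℝ) - 1)

/-- The criterion value `∫ Φ(C_{d,τ0,λ0}) g(dτ0)`. -/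
def PhiCrit {p t : ℕ} (n : ℕ) (S : Matrix (Fin p) (Fin p) ℝ)
    (Phi : Matrix (Fin t) (Fin t) ℝ → ℝ) (g : Measure (Fin t → ℝ)) (l0 : ℝ)
    (w : TrtSeq p t → ℝ) : ℝ :=
  ∫ τ0, Phi (CInfo n S w τ0 l0) ∂g

/-- Competing designs for a `Φ`-criterion. -/
def PhiAdmissible {p t : ℕ} (n : ℕ) (S : Matrix (Fin p) (Fin p) ℝ)
    (Phi : Matrix (Fin t) (Fin t) ℝ → ℝ) (g : Measure (Fin t → ℝ)) (l0 : ℝ)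
    (w : TrtSeq p t → ℝ) : Prop :=
  IsDesign w ∧ (∀ᵐ τ0 ∂g, 0 < τ0 ⬝ᵥ (CD n S w 1 1 *ᵥ τ0)) ∧
    Integrable (fun τ0 => Phi (CInfo n S w τ0 l0)) g

/-- `d` is `Φ_{g,λ0}`-optimal. -/
def PhiOptimal {p t : ℕ} (n : ℕ) (S : Matrix (Fin p) (Fin p) ℝ)
    (Phi : Matrix (Fin t) (Fin t) ℝ → ℝ) (g : Measure (Fin t → ℝ)) (l0 : ℝ)
    (w : TrtSeq p t → ℝ) : Prop :=
  ∀ w' : TrtSeq p t → ℝ, PhiAdmissible n S Phi g l0 w' →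
    PhiCrit n S Phi g l0 w' ≤ PhiCrit n S Phi g l0 w

/-- `H_1(s) = F_s`, `H_2(s) = T_s + λ0 F_s` (for estimating `λ`). -/
def Hmat {p t : ℕ} (l0 : ℝ) (i : Fin 2) (s : TrtSeq p t) : Matrix (Fin p) (Fin t) ℝ :=
  if i = 0 then Fmat s else Tmat s + l0 • Fmat s

/-- `Â_{sij} = B_t H_i(s)' B̃ H_j(s) B_t`. -/
def Ahat {p t : ℕ} (S : Matrix (Fin p) (Fin p) ℝ) (l0 : ℝ) (s : TrtSeq p t) (i j : Fin 2) :
    Matrix (Fin t) (Fin t) ℝ :=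
  Bmat t * (Hmat l0 i s)ᵀ * Btil S * Hmat l0 j s * Bmat t

/-- `h_{sij} = tr Â_{sij}`. -/
def hseq {p t : ℕ} (S : Matrix (Fin p) (Fin p) ℝ) (l0 : ℝ) (s : TrtSeq p t) (i j : Fin 2) : ℝ :=
  (Ahat S l0 s i j).trace

/-- `Â_{dij} = n ∑_s p_s Â_{sij}`. -/
def AhatD {p t : ℕ} (n : ℕ) (S : Matrix (Fin p) (Fin p) ℝ) (l0 : ℝ) (w : TrtSeq p t → ℝ)
    (i j : Fin 2) : Matrix (Fin t) (Fin t) ℝ :=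
  (n : ℝ) • ∑ s : TrtSeq p t, w s • Ahat S l0 s i j

/-- `A_{dij} = Â_{dij} - n (∑_s p_s H_i(s) B_t)' B̃ (∑_s p_s H_j(s) B_t)`. -/
def AD {p t : ℕ} (n : ℕ) (S : Matrix (Fin p) (Fin p) ℝ) (l0 : ℝ) (w : TrtSeq p t → ℝ)
    (i j : Fin 2) : Matrix (Fin t) (Fin t) ℝ :=
  AhatD n S l0 w i j -
    (n : ℝ) • ((∑ s : TrtSeq p t, w s • (Hmat l0 i s * Bmat t))ᵀ * Btil S *
      (∑ s : TrtSeq p t, w s • (Hmat l0 j s * Bmat t)))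

/-- `G` is a generalized inverse of `A`. -/
def IsGInv {t : ℕ} (A G : Matrix (Fin t) (Fin t) ℝ) : Prop := A * G * A = A

/-- `A_d(G) = A_{d11} - A_{d12} G A_{d21}` with `A_{d21} = A_{d12}'`. -/
def ADfun {p t : ℕ} (n : ℕ) (S : Matrix (Fin p) (Fin p) ℝ) (l0 : ℝ) (w : TrtSeq p t → ℝ)
    (G : Matrix (Fin t) (Fin t) ℝ) : Matrix (Fin t) (Fin t) ℝ :=
  AD n S l0 w 0 0 - AD n S l0 w 0 1 * G * (AD n S l0 w 0 1)ᵀ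

/-- `r_s(x) = h_{s11} + 2 h_{s12} x + h_{s22} x²`. -/
def rSeq {p t : ℕ} (S : Matrix (Fin p) (Fin p) ℝ) (l0 : ℝ) (s : TrtSeq p t) (x : ℝ) : ℝ :=
  hseq S l0 s 0 0 + 2 * hseq S l0 s 0 1 * x + hseq S l0 s 1 1 * x ^ 2

/-- `r(x) = max_s r_s(x)`. -/
def rMax (p t : ℕ) (S : Matrix (Fin p) (Fin p) ℝ) (l0 : ℝ) (x : ℝ) : ℝ :=
  sSup (Set.range fun s : TrtSeq p t => rSeq S l0 s x)

/-- `y_0 = inf_x r(x)`. -/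
def yZero (p t : ℕ) (S : Matrix (Fin p) (Fin p) ℝ) (l0 : ℝ) : ℝ := ⨅ x : ℝ, rMax p t S l0 x

/-!
With a known carryover proportion `z` the information for the direct effects is
`infoKnown z = C_{d11} + z (C_{d12} + C_{d21}) + z² C_{d22}`, with trace at most `n q_d(z)` and
equality when treatments are equireplicated in every period. Having to estimate the proportion
costs a rank one term; completing the square and Cauchy–Schwarz bound its trace below by
`τ' (infoKnown λ0 - infoKnown x) τ / τ'τ`, for every `x`. Averaging over an exchangeable prior
replaces `ττ' / τ'τ` by `B_t / (t - 1)`, so that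

  `T_{g,λ0}(d) ≤ n (q_d(x) + (t - 2) q_d(λ0)) / (t - 1)²`  for every `x`,

with equality at `x = x_d` if `d` is pseudo symmetric. The right side is linear in the weights of
the design, so at the fixed point `x = x_d` a bound on each sequence bounds all competitors at once.
Conversely, an optimal `d` is compared with its mixtures with the symmetrization of a single
sequence `s`; these are pseudo symmetric, and letting the mixing weight tend to `0` gives the
inequality for `s`.
-/

/-! ### Completely symmetric matrices -/

lemma exists_eq_smul_one_add_of_submatrix_perm {α R : Type*} [DecidableEq α] [Ring R]
    {M : Matrix α α R}
    (hM : ∀ σ : Equiv.Perm α, M.submatrix σ σ = M) :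
    ∃ a b : R, M = a • (1 : Matrix α α R) + b • Matrix.of fun _ _ => 1 := by
  have hinv : ∀ (σ : Equiv.Perm α) i j, M (σ i) (σ j) = M i j := fun σ i j =>
    congrFun₂ (hM σ) i j
  obtain ⟨d, hd⟩ : ∃ d, ∀ i, M i i = d := by
    rcases isEmpty_or_nonempty α with _ | ⟨⟨i₀⟩⟩
    · exact ⟨0, isEmptyElim⟩
    · exact ⟨M i₀ i₀, fun i => by simpa using hinv (Equiv.swap i₀ i) i₀ i₀⟩
  obtain ⟨b, hb⟩ : ∃ b, ∀ i j, i ≠ j → M i j = b := by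
    by_cases h : ∃ i₀ j₀ : α, i₀ ≠ j₀
    · obtain ⟨i₀, j₀, h₀⟩ := h
      refine ⟨M i₀ j₀, fun i j hij => ?_⟩
      obtain ⟨σ, rfl, rfl⟩ := MulAction.is_two_pretransitive_iff.mp
        (Equiv.Perm.isMultiplyPretransitive α 2) h₀ hij
      exact hinv σ i₀ j₀
    · push Not at h
      exact ⟨0, fun i j hij => absurd (h i j) hij⟩
  refine ⟨d - b, b, ?_⟩
  ext i j
  by_cases hij : i = j
  · simp [hij, hd]
  · simp [hij, hb i j hij]

lemma Bmat_transpose (t : ℕ) : (Bmat t)ᵀ = Bmat t := by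
  ext i j
  simp [Bmat, Jmat, Matrix.one_apply, eq_comm]

lemma Bmat_submatrix_perm {t : ℕ} (σ : Equiv.Perm (Fin t)) :
    (Bmat t).submatrix σ σ = Bmat t := by
  ext i j
  simp [Bmat, Jmat, Matrix.one_apply]

lemma Jmat_mulVec {t : ℕ} (τ : Fin t → ℝ) : Jmat t *ᵥ τ = fun _ => ∑ i, τ i := by
  ext i
  simp [Jmat, Matrix.mulVec, dotProduct]

lemma Bmat_mulVec_of_sum_eq_zero {t : ℕ} {τ : Fin t → ℝ} (hτ : ∑ i, τ i = 0) :
    Bmat t *ᵥ τ = τ := by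
  ext i
  simp [Bmat, Matrix.sub_mulVec, Matrix.smul_mulVec, Jmat_mulVec, hτ]

lemma Bmat_mulVec_one (t : ℕ) : Bmat t *ᵥ 1 = 0 := by
  ext i
  have ht : (t : ℝ) ≠ 0 := Nat.cast_ne_zero.2 i.pos.ne'
  simp [Bmat, Matrix.sub_mulVec, Matrix.smul_mulVec, Jmat_mulVec, ht]

lemma trace_Bmat {t : ℕ} (ht : t ≠ 0) : (Bmat t).trace = (t : ℝ) - 1 := by
  simp [Bmat, Matrix.trace, Jmat, ht]

lemma mul_Bmat_of_mulVec_one {t : ℕ} {m : Type*} {A : Matrix m (Fin t) ℝ} (hA : A *ᵥ 1 = 0) :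
    A * Bmat t = A := by
  have hAJ : A * Jmat t = 0 := by
    ext i j
    simpa [Jmat, Matrix.mul_apply, Matrix.mulVec, dotProduct] using congrFun hA i
  rw [Bmat, Matrix.mul_sub, Matrix.mul_smul, hAJ, smul_zero, sub_zero, Matrix.mul_one]

lemma Bmat_eq_zero_of_le_one {t : ℕ} (ht : t ≤ 1) : Bmat t = 0 := by
  ext i j
  interval_cases t
  · exact i.elim0
  · simp [Bmat, Jmat, Subsingleton.elim i j]

lemma eq_smul_Bmat_of_mulVec_one {t : ℕ} {M : Matrix (Fin t) (Fin t) ℝ} {a b : ℝ}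
    (hM : M = a • (1 : Matrix (Fin t) (Fin t) ℝ) + b • Jmat t) (h1 : M *ᵥ 1 = 0) :
    M = (M.trace / ((t : ℝ) - 1)) • Bmat t := by
  have hJB : Jmat t * Bmat t = 0 := by
    ext i j
    have hcol : ∑ k, (Bmat t)ᵀ k j = 0 := by
      simpa [Matrix.mulVec, dotProduct] using congrFun (Bmat_mulVec_one t) j
    simpa only [Bmat_transpose, Jmat, Matrix.mul_apply, Matrix.of_apply, one_mul,
      Matrix.zero_apply] using hcol
  have hMB : M = a • Bmat t := by
    rw [← mul_Bmat_of_mulVec_one h1, hM, Matrix.add_mul, Matrix.smul_mul, Matrix.smul_mul,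
      Matrix.one_mul, hJB, smul_zero, add_zero]
  rcases le_or_gt t 1 with ht | ht
  · rw [hMB, Bmat_eq_zero_of_le_one ht, smul_zero, smul_zero]
  · have ht1 : (t : ℝ) - 1 ≠ 0 := sub_ne_zero.2 (by exact_mod_cast ht.ne')
    rw [hMB, Matrix.trace_smul, trace_Bmat (by omega), smul_eq_mul, mul_div_cancel_right₀ _ ht1]

/-! ### The covariance kernel -/

lemma Btil_posSemidef {p : ℕ} {S : Matrix (Fin p) (Fin p) ℝ} (hS : S.PosSemidef) :
    (Btil S).PosSemidef := by
  set c := (fun _ => (1 : ℝ)) ⬝ᵥ (S⁻¹ *ᵥ fun _ => (1 : ℝ)) with hc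
  have hsymm : (S⁻¹)ᵀ = S⁻¹ := hS.inv.isHermitian
  have hJ : (Jmat p)ᵀ = Jmat p := rfl
  have hquad : S⁻¹ * Jmat p * S⁻¹ * Jmat p * S⁻¹ = c • (S⁻¹ * Jmat p * S⁻¹) := by
    have hJSJ : Jmat p * S⁻¹ * Jmat p = c • Jmat p := by
      ext i j
      simp only [hc, Jmat, Matrix.mul_apply, Matrix.smul_apply, Matrix.of_apply, dotProduct,
        Matrix.mulVec, one_mul, mul_one, smul_eq_mul]
      exact Finset.sum_comm
    rw [← Matrix.smul_mul, ← Matrix.mul_smul, ← hJSJ]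
    simp only [Matrix.mul_assoc]
  have hcc : c⁻¹ * c⁻¹ * c = c⁻¹ := by
    by_cases h : c = 0 <;> simp [h]
  have hfactor : Btil S =
      (1 - c⁻¹ • (Jmat p * S⁻¹))ᴴ * S⁻¹ * (1 - c⁻¹ • (Jmat p * S⁻¹)) := by
    simp only [Matrix.conjTranspose_eq_transpose_of_trivial, Matrix.transpose_sub,
      Matrix.transpose_one, Matrix.transpose_smul, Matrix.transpose_mul, hsymm, hJ,
      Matrix.sub_mul, Matrix.mul_sub, Matrix.one_mul, Matrix.mul_one, Matrix.smul_mul,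
      Matrix.mul_smul, ← Matrix.mul_assoc, hquad, Btil, ← hc]
    linear_combination (norm := module) (-hcc) • (S⁻¹ * Jmat p * S⁻¹)
  rw [hfactor]
  exact hS.inv.conjTranspose_mul_mul_same _

lemma trace_quadratic_add_smul {m k : Type*} [Fintype m] [Fintype k] {K : Matrix m m ℝ}
    (hK : K.IsSymm) (A B : Matrix m k ℝ) (z : ℝ) :
    ((A + z • B)ᵀ * K * (A + z • B)).trace =
      (Aᵀ * K * A).trace + 2 * z * (Aᵀ * K * B).trace + z ^ 2 * (Bᵀ * K * B).trace := by
  have hBA : (Bᵀ * K * A).trace = (Aᵀ * K * B).trace := by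
    rw [← Matrix.trace_transpose]
    simp only [Matrix.transpose_mul, Matrix.transpose_transpose, hK.eq, Matrix.mul_assoc]
  simp only [Matrix.transpose_add, Matrix.transpose_smul, Matrix.add_mul, Matrix.mul_add,
    Matrix.smul_mul, Matrix.mul_smul, Matrix.trace_add, Matrix.trace_smul, smul_eq_mul, hBA]
  ring

lemma trace_transpose_mul_mul_nonneg {m k : Type*} [Fintype m] [Fintype k] {K : Matrix m m ℝ}
    (hK : K.PosSemidef) (A : Matrix m k ℝ) : 0 ≤ (Aᵀ * K * A).trace :=
  (hK.conjTranspose_mul_mul_same A).trace_nonneg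

/-! ### Information matrices -/

section Information

variable {p t : ℕ} (n : ℕ) (S : Matrix (Fin p) (Fin p) ℝ) (w : TrtSeq p t → ℝ)

/-- The mean `∑_s p_s G_i(s) B_t` of the centred incidence matrices under a design; its quadratic
form in `B̃` is the gap between `Ĉ_{dij}` and `C_{dij}`. -/
def centeredMean (i : Fin 2) : Matrix (Fin p) (Fin t) ℝ :=
  ∑ s, w s • (Gmat i s * Bmat t)

/-- The information matrix `C_{d11} + z (C_{d12} + C_{d21}) + z² C_{d22}` for the direct effects
when the proportionality factor is known to be `z`: this is `C_{d,τ0,z}` without the last term,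
which is the price of estimating the factor. -/
def infoKnown (z : ℝ) : Matrix (Fin t) (Fin t) ℝ :=
  CD n S w 0 0 + z • (CD n S w 0 1 + CD n S w 1 0) + z ^ 2 • CD n S w 1 1

variable {S}

lemma Chat_eq_transpose_mul_mul (S : Matrix (Fin p) (Fin p) ℝ) (s : TrtSeq p t) (i j : Fin 2) :
    Chat S s i j = (Gmat i s * Bmat t)ᵀ * Btil S * (Gmat j s * Bmat t) := by
  simp only [Chat, Matrix.transpose_mul, Bmat_transpose, Matrix.mul_assoc]

lemma CD_eq_ChatD_sub (S : Matrix (Fin p) (Fin p) ℝ) (i j : Fin 2) :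
    CD n S w i j = ChatD n S w i j -
      (n : ℝ) • ((centeredMean w i)ᵀ * Btil S * centeredMean w j) := rfl

lemma Chat_transpose (hS : (Btil S).IsSymm) (s : TrtSeq p t) (i j : Fin 2) :
    (Chat S s i j)ᵀ = Chat S s j i := by
  simp only [Chat_eq_transpose_mul_mul, Matrix.transpose_mul, Matrix.transpose_transpose, hS.eq,
    Matrix.mul_assoc]

lemma ChatD_transpose (hS : (Btil S).IsSymm) (i j : Fin 2) :
    (ChatD n S w i j)ᵀ = ChatD n S w j i := by
  simp only [ChatD, Matrix.transpose_smul, Matrix.transpose_sum, Chat_transpose hS]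

lemma CD_transpose (hS : (Btil S).IsSymm) (i j : Fin 2) :
    (CD n S w i j)ᵀ = CD n S w j i := by
  simp only [CD_eq_ChatD_sub, Matrix.transpose_sub, Matrix.transpose_smul, ChatD_transpose n w hS,
    Matrix.transpose_mul, Matrix.transpose_transpose, hS.eq, Matrix.mul_assoc]

lemma ChatD_mulVec_one (i j : Fin 2) : ChatD n S w i j *ᵥ 1 = 0 := by
  simp only [ChatD, Chat, Matrix.smul_mulVec, Matrix.sum_mulVec, ← Matrix.mulVec_mulVec,
    Bmat_mulVec_one, Matrix.mulVec_zero, smul_zero, Finset.sum_const_zero]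

lemma centeredMean_mulVec_one (i : Fin 2) : centeredMean w i *ᵥ 1 = 0 := by
  simp only [centeredMean, Matrix.smul_mulVec, Matrix.sum_mulVec, ← Matrix.mulVec_mulVec,
    Bmat_mulVec_one, Matrix.mulVec_zero, smul_zero, Finset.sum_const_zero]

lemma CD_mulVec_one (i j : Fin 2) : CD n S w i j *ᵥ 1 = 0 := by
  simp only [CD_eq_ChatD_sub, Matrix.sub_mulVec, Matrix.smul_mulVec, ChatD_mulVec_one,
    ← Matrix.mulVec_mulVec, centeredMean_mulVec_one, Matrix.mulVec_zero, smul_zero, sub_zero]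

lemma infoKnown_mulVec_one (z : ℝ) : infoKnown n S w z *ᵥ 1 = 0 := by
  simp only [infoKnown, Matrix.add_mulVec, Matrix.smul_mulVec, CD_mulVec_one, smul_zero, add_zero]

lemma trace_CD (i j : Fin 2) :
    (CD n S w i j).trace =
      cD n S w i j - n * ((centeredMean w i)ᵀ * Btil S * centeredMean w j).trace := by
  rw [CD_eq_ChatD_sub, Matrix.trace_sub, Matrix.trace_smul, smul_eq_mul, cD]

lemma cD_eq_sum (i j : Fin 2) : cD n S w i j = n * ∑ s, w s * cseq S s i j := by
  simp only [cD, ChatD, cseq, Matrix.trace_smul, Matrix.trace_sum, smul_eq_mul]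

lemma natCast_mul_qD (x : ℝ) :
    n * qD S w x = cD n S w 0 0 + 2 * cD n S w 0 1 * x + cD n S w 1 1 * x ^ 2 := by
  have hsum : qD S w x = ∑ s, w s * cseq S s 0 0 + 2 * (∑ s, w s * cseq S s 0 1) * x +
      (∑ s, w s * cseq S s 1 1) * x ^ 2 := by
    simp only [qD, qSeq, Finset.mul_sum, Finset.sum_mul, ← Finset.sum_add_distrib]
    exact Finset.sum_congr rfl fun s _ => by ring
  rw [hsum]
  simp only [cD_eq_sum]
  ring

lemma trace_infoKnown (hS : (Btil S).IsSymm) (z : ℝ) :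
    (infoKnown n S w z).trace = n * qD S w z -
      n * ((centeredMean w 0 + z • centeredMean w 1)ᵀ * Btil S *
        (centeredMean w 0 + z • centeredMean w 1)).trace := by
  have h10 : (CD n S w 1 0).trace = (CD n S w 0 1).trace := by
    rw [← CD_transpose n w hS, Matrix.trace_transpose]
  rw [trace_quadratic_add_smul hS, natCast_mul_qD]
  simp only [infoKnown, Matrix.trace_add, Matrix.trace_smul, smul_eq_mul, h10, trace_CD]
  ring

lemma trace_infoKnown_le (hS : (Btil S).PosSemidef) (z : ℝ) :
    (infoKnown n S w z).trace ≤ n * qD S w z := by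
  rw [trace_infoKnown n w hS.isHermitian]
  exact sub_le_self _ (mul_nonneg n.cast_nonneg (trace_transpose_mul_mul_nonneg hS _))

lemma dotProduct_infoKnown (hS : (Btil S).IsSymm) (τ : Fin t → ℝ) (l x : ℝ) :
    τ ⬝ᵥ (infoKnown n S w l *ᵥ τ) - τ ⬝ᵥ (infoKnown n S w x *ᵥ τ) =
      2 * (l - x) * (τ ⬝ᵥ ((CD n S w 0 1 + l • CD n S w 1 1) *ᵥ τ)) -
        (l - x) ^ 2 * (τ ⬝ᵥ (CD n S w 1 1 *ᵥ τ)) := by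
  have h10 : τ ⬝ᵥ (CD n S w 1 0 *ᵥ τ) = τ ⬝ᵥ (CD n S w 0 1 *ᵥ τ) := by
    rw [← CD_transpose n w hS, Matrix.mulVec_transpose, dotProduct_comm,
      Matrix.dotProduct_mulVec]
  simp only [infoKnown, Matrix.add_mulVec, Matrix.smul_mulVec, dotProduct_add, dotProduct_smul,
    smul_eq_mul, h10]
  ring

lemma trace_CInfo (hS : (Btil S).IsSymm) (τ : Fin t → ℝ) (l : ℝ) :
    (CInfo n S w τ l).trace = (infoKnown n S w l).trace - (τ ⬝ᵥ (CD n S w 1 1 *ᵥ τ))⁻¹ *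
      (((CD n S w 0 1 + l • CD n S w 1 1) *ᵥ τ) ⬝ᵥ
        ((CD n S w 0 1 + l • CD n S w 1 1) *ᵥ τ)) := by
  have hT : CD n S w 1 0 + l • CD n S w 1 1 = (CD n S w 0 1 + l • CD n S w 1 1)ᵀ := by
    rw [Matrix.transpose_add, Matrix.transpose_smul, CD_transpose n w hS, CD_transpose n w hS]
  rw [CInfo, hT, ← infoKnown, Matrix.trace_sub, Matrix.trace_smul, Matrix.mul_vecMulVec,
    Matrix.vecMulVec_mul, Matrix.vecMul_transpose, Matrix.trace_vecMulVec, smul_eq_mul]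

end Information

-- Cauchy–Schwarz, after completing the square in `y`.
lemma div_dotProduct_self_le {ι : Type*} [Fintype ι] (τ v : ι → ℝ) {a : ℝ} (ha : 0 < a) (y : ℝ) :
    (2 * y * (τ ⬝ᵥ v) - y ^ 2 * a) / (τ ⬝ᵥ τ) ≤ a⁻¹ * (v ⬝ᵥ v) := by
  have hself : ∀ u : ι → ℝ, u ⬝ᵥ u = ∑ i, u i ^ 2 := fun u =>
    Finset.sum_congr rfl fun i _ => (sq (u i)).symm
  have hnonneg : ∀ u : ι → ℝ, 0 ≤ u ⬝ᵥ u := fun u =>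
    (hself u).symm ▸ Finset.sum_nonneg fun i _ => sq_nonneg _
  refine div_le_of_le_mul₀ (hnonneg τ) (mul_nonneg (inv_nonneg.2 ha.le) (hnonneg v)) ?_
  calc 2 * y * (τ ⬝ᵥ v) - y ^ 2 * a
      = a⁻¹ * (τ ⬝ᵥ v) ^ 2 - a * (y - a⁻¹ * (τ ⬝ᵥ v)) ^ 2 := by field_simp; ring
    _ ≤ a⁻¹ * (τ ⬝ᵥ v) ^ 2 := sub_le_self _ (by positivity)
    _ ≤ a⁻¹ * ((τ ⬝ᵥ τ) * (v ⬝ᵥ v)) := by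
        rw [hself, hself]
        gcongr
        exact Finset.sum_mul_sq_le_sq_mul_sq _ _ _
    _ = a⁻¹ * (v ⬝ᵥ v) * (τ ⬝ᵥ τ) := by ring

lemma trace_CInfo_le {p t n : ℕ} {S : Matrix (Fin p) (Fin p) ℝ} (hS : (Btil S).IsSymm)
    {w : TrtSeq p t → ℝ} {τ : Fin t → ℝ} (hτ : 0 < τ ⬝ᵥ (CD n S w 1 1 *ᵥ τ)) (l x : ℝ) :
    (CInfo n S w τ l).trace ≤ (infoKnown n S w l).trace -
      (τ ⬝ᵥ (infoKnown n S w l *ᵥ τ) / (τ ⬝ᵥ τ) - τ ⬝ᵥ (infoKnown n S w x *ᵥ τ) / (τ ⬝ᵥ τ)) := by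
  rw [trace_CInfo n w hS, ← sub_div, dotProduct_infoKnown n w hS]
  exact sub_le_sub_left (div_dotProduct_self_le τ _ hτ (l - x)) _

/-! ### Averaging over an exchangeable prior -/

section Prior

variable {ι : Type*} [Fintype ι] (g : Measure (ι → ℝ))

/-- The second moment matrix of the direction `τ / |τ|` of a random vector `τ` with law `g`
(with value `0` for the direction at `τ = 0`). -/
def directionMoment : Matrix ι ι ℝ := Matrix.of fun i j => ∫ τ, τ i * τ j / (τ ⬝ᵥ τ) ∂g

lemma measurable_mul_div_dotProduct_self (i j : ι) :
    Measurable fun τ : ι → ℝ => τ i * τ j / (τ ⬝ᵥ τ) := by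
  unfold dotProduct
  fun_prop

lemma dotProduct_mulVec_div_eq_sum (A : Matrix ι ι ℝ) (τ : ι → ℝ) :
    τ ⬝ᵥ (A *ᵥ τ) / (τ ⬝ᵥ τ) = ∑ i, ∑ j, A i j * (τ j * τ i / (τ ⬝ᵥ τ)) := by
  conv_lhs => rw [dotProduct, Finset.sum_div]
  refine Finset.sum_congr rfl fun i _ => ?_
  rw [Matrix.mulVec, dotProduct, Finset.mul_sum, Finset.sum_div]
  exact Finset.sum_congr rfl fun j _ => by ring

variable [IsFiniteMeasure g]

lemma integrable_mul_div_dotProduct_self (i j : ι) :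
    Integrable (fun τ : ι → ℝ => τ i * τ j / (τ ⬝ᵥ τ)) g := by
  refine .of_bound (measurable_mul_div_dotProduct_self i j).aestronglyMeasurable 1
    (.of_forall fun τ => ?_)
  have hcoord : ∀ k, τ k * τ k ≤ τ ⬝ᵥ τ := fun k =>
    Finset.single_le_sum (f := fun k => τ k * τ k) (fun i _ => mul_self_nonneg _)
      (Finset.mem_univ k)
  have hnonneg : 0 ≤ τ ⬝ᵥ τ := (mul_self_nonneg (τ i)).trans (hcoord i)
  rw [Real.norm_eq_abs, abs_div, abs_of_nonneg hnonneg]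
  refine div_le_one_of_le₀ (abs_le.2 ⟨?_, ?_⟩) hnonneg
  · linarith [hcoord i, hcoord j, two_mul_le_add_sq (τ i) (-τ j)]
  · linarith [hcoord i, hcoord j, two_mul_le_add_sq (τ i) (τ j)]

lemma integrable_dotProduct_mulVec_div (A : Matrix ι ι ℝ) :
    Integrable (fun τ : ι → ℝ => τ ⬝ᵥ (A *ᵥ τ) / (τ ⬝ᵥ τ)) g := by
  simp only [dotProduct_mulVec_div_eq_sum]
  exact integrable_finsetSum _ fun i _ => integrable_finsetSum _ fun j _ =>
    (integrable_mul_div_dotProduct_self g j i).const_mul _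

lemma integral_dotProduct_mulVec_div (A : Matrix ι ι ℝ) :
    ∫ τ, τ ⬝ᵥ (A *ᵥ τ) / (τ ⬝ᵥ τ) ∂g = (A * directionMoment g).trace := by
  have hint : ∀ i j, Integrable (fun τ : ι → ℝ => A i j * (τ j * τ i / (τ ⬝ᵥ τ))) g := fun i j =>
    (integrable_mul_div_dotProduct_self g j i).const_mul _
  simp only [dotProduct_mulVec_div_eq_sum]
  rw [integral_finsetSum _ fun i _ => integrable_finsetSum _ fun j _ => hint i j]
  refine Finset.sum_congr rfl fun i _ => ?_
  rw [integral_finsetSum _ fun j _ => hint i j]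
  simp only [integral_const_mul, Matrix.diag_apply, Matrix.mul_apply, directionMoment,
    Matrix.of_apply]

end Prior

lemma two_le_of_sum_eq_zero {t : ℕ} {τ : Fin t → ℝ} (hsum : ∑ i, τ i = 0) (hne : τ ≠ 0) :
    2 ≤ t := by
  by_contra! ht
  have : Subsingleton (Fin t) := Fin.subsingleton_iff_le_one.2 (by omega)
  exact hne (funext fun i => by simpa [Fintype.sum_subsingleton _ i] using hsum)

namespace IsExchangeablePrior

variable {t : ℕ} {g : Measure (Fin t → ℝ)}

lemma ae_sum_eq_zero_and_ne_zero (hg : IsExchangeablePrior g) :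
    ∀ᵐ τ ∂g, ∑ i, τ i = 0 ∧ τ ≠ 0 :=
  ae_iff.2 hg.2.1

lemma two_le (hg : IsExchangeablePrior g) : 2 ≤ t := by
  have := hg.1
  obtain ⟨τ, hsum, hne⟩ := hg.ae_sum_eq_zero_and_ne_zero.exists
  exact two_le_of_sum_eq_zero hsum hne

lemma directionMoment_submatrix_perm (hg : IsExchangeablePrior g) (σ : Equiv.Perm (Fin t)) :
    (directionMoment g).submatrix σ σ = directionMoment g := by
  ext i j
  have hmeas : Measurable fun (τ : Fin t → ℝ) i => τ (σ i) := by fun_prop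
  have hnorm : ∀ τ : Fin t → ℝ, (fun i => τ (σ i)) ⬝ᵥ (fun i => τ (σ i)) = τ ⬝ᵥ τ := fun τ =>
    Equiv.sum_comp σ fun i => τ i * τ i
  calc ∫ τ, τ (σ i) * τ (σ j) / (τ ⬝ᵥ τ) ∂g
      = ∫ τ, τ i * τ j / (τ ⬝ᵥ τ) ∂Measure.map (fun τ i => τ (σ i)) g := by
        rw [integral_map hmeas.aemeasurable
          (measurable_mul_div_dotProduct_self i j).aestronglyMeasurable]
        simp only [hnorm]
    _ = ∫ τ, τ i * τ j / (τ ⬝ᵥ τ) ∂g := by rw [hg.2.2 σ]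

lemma directionMoment_mulVec_one (hg : IsExchangeablePrior g) : directionMoment g *ᵥ 1 = 0 := by
  have := hg.1
  ext i
  calc (directionMoment g *ᵥ 1) i
      = ∫ τ, ∑ j, τ i * τ j / (τ ⬝ᵥ τ) ∂g := by
        rw [integral_finsetSum _ fun j _ => integrable_mul_div_dotProduct_self g i j]
        simp [directionMoment, Matrix.mulVec, dotProduct]
    _ = ∫ _, 0 ∂g := by
        refine integral_congr_ae ?_
        filter_upwards [hg.ae_sum_eq_zero_and_ne_zero] with τ hτ
        rw [← Finset.sum_div, ← Finset.mul_sum, hτ.1, mul_zero, zero_div]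
    _ = 0 := integral_zero _ _

lemma trace_directionMoment (hg : IsExchangeablePrior g) : (directionMoment g).trace = 1 := by
  have := hg.1
  calc (directionMoment g).trace
      = ∫ τ, ∑ i, τ i * τ i / (τ ⬝ᵥ τ) ∂g :=
        (integral_finsetSum _ fun i _ => integrable_mul_div_dotProduct_self g i i).symm
    _ = ∫ _, 1 ∂g := by
        refine integral_congr_ae ?_
        filter_upwards [hg.ae_sum_eq_zero_and_ne_zero] with τ hτ
        rw [← Finset.sum_div]
        exact div_self (dotProduct_self_eq_zero.not.2 hτ.2)
    _ = 1 := by simp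

lemma directionMoment_eq_smul_Bmat (hg : IsExchangeablePrior g) :
    directionMoment g = ((t : ℝ) - 1)⁻¹ • Bmat t := by
  obtain ⟨a, b, hab⟩ :=
    exists_eq_smul_one_add_of_submatrix_perm hg.directionMoment_submatrix_perm
  rw [eq_smul_Bmat_of_mulVec_one hab hg.directionMoment_mulVec_one, hg.trace_directionMoment,
    one_div]

lemma integral_dotProduct_mulVec_div_eq_trace (hg : IsExchangeablePrior g)
    {A : Matrix (Fin t) (Fin t) ℝ} (hA : A *ᵥ 1 = 0) :
    ∫ τ, τ ⬝ᵥ (A *ᵥ τ) / (τ ⬝ᵥ τ) ∂g = A.trace / ((t : ℝ) - 1) := by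
  have := hg.1
  rw [integral_dotProduct_mulVec_div, hg.directionMoment_eq_smul_Bmat, Matrix.mul_smul,
    mul_Bmat_of_mulVec_one hA, Matrix.trace_smul, smul_eq_mul, inv_mul_eq_div]

lemma PhiCrit_PhiT_le {p n : ℕ} {S : Matrix (Fin p) (Fin p) ℝ} (hg : IsExchangeablePrior g)
    (hS : (Btil S).PosSemidef) {l : ℝ} {w : TrtSeq p t → ℝ} (hw : PhiAdmissible n S PhiT g l w)
    (x : ℝ) :
    PhiCrit n S PhiT g l w ≤
      n * (qD S w x + ((t : ℝ) - 2) * qD S w l) / ((t : ℝ) - 1) ^ 2 := by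
  have := hg.1
  have ht2 : (2 : ℝ) ≤ t := by exact_mod_cast hg.two_le
  have ht1 : (0 : ℝ) < (t : ℝ) - 1 := by linarith
  obtain ⟨-, hpos, hint⟩ := hw
  have hI := fun z => integrable_dotProduct_mulVec_div g (infoKnown n S w z)
  have hI_sub : Integrable (fun τ => τ ⬝ᵥ (infoKnown n S w l *ᵥ τ) / (τ ⬝ᵥ τ) -
      τ ⬝ᵥ (infoKnown n S w x *ᵥ τ) / (τ ⬝ᵥ τ)) g := (hI l).sub (hI x)
  have hval := fun z =>
    hg.integral_dotProduct_mulVec_div_eq_trace (infoKnown_mulVec_one n w z (S := S))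
  calc PhiCrit n S PhiT g l w
      ≤ ∫ τ, ((infoKnown n S w l).trace - (τ ⬝ᵥ (infoKnown n S w l *ᵥ τ) / (τ ⬝ᵥ τ) -
          τ ⬝ᵥ (infoKnown n S w x *ᵥ τ) / (τ ⬝ᵥ τ))) / ((t : ℝ) - 1) ∂g := by
        refine integral_mono_ae hint
          (((integrable_const _).sub hI_sub).div_const _) ?_
        filter_upwards [hpos] with τ hτ
        exact div_le_div_of_nonneg_right (trace_CInfo_le hS.isHermitian hτ l x) ht1.le
    _ = ((infoKnown n S w x).trace + ((t : ℝ) - 2) * (infoKnown n S w l).trace) /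
          ((t : ℝ) - 1) ^ 2 := by
        rw [integral_div, integral_sub (integrable_const _) hI_sub,
          integral_sub (hI l) (hI x), hval, hval, integral_const, probReal_univ, one_smul]
        field_simp
        ring
    _ ≤ (n * qD S w x + ((t : ℝ) - 2) * (n * qD S w l)) / ((t : ℝ) - 1) ^ 2 := by
        gcongr
        · exact trace_infoKnown_le n w hS x
        · exact trace_infoKnown_le n w hS l
    _ = n * (qD S w x + ((t : ℝ) - 2) * qD S w l) / ((t : ℝ) - 1) ^ 2 := by ring

end IsExchangeablePrior

/-! ### Pseudo symmetric designs -/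

lemma natCast_mul_qD_eq_add_sq {p t n : ℕ} {S : Matrix (Fin p) (Fin p) ℝ} {w : TrtSeq p t → ℝ}
    (hc : cD n S w 1 1 ≠ 0) (x : ℝ) :
    n * qD S w x =
      n * qD S w (xD n S w) + (cD n S w 0 1 + x * cD n S w 1 1) ^ 2 / cD n S w 1 1 := by
  rw [natCast_mul_qD, natCast_mul_qD, xD]
  field_simp
  ring

lemma natCast_pos_of_cD_pos {p t n : ℕ} {S : Matrix (Fin p) (Fin p) ℝ} {w : TrtSeq p t → ℝ}
    {i j : Fin 2} (hc : 0 < cD n S w i j) : (0 : ℝ) < n := by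
  refine n.cast_nonneg.lt_of_ne fun hn => hc.ne' ?_
  rw [cD_eq_sum, ← hn, zero_mul]

lemma qD_xD_le {p t n : ℕ} {S : Matrix (Fin p) (Fin p) ℝ} {w : TrtSeq p t → ℝ}
    (hc : 0 < cD n S w 1 1) (x : ℝ) : qD S w (xD n S w) ≤ qD S w x := by
  refine le_of_mul_le_mul_left ?_ (natCast_pos_of_cD_pos hc)
  rw [natCast_mul_qD_eq_add_sq hc.ne' x]
  exact le_add_of_nonneg_right (div_nonneg (sq_nonneg _) hc.le)

section Equireplicated

variable {p t : ℕ} {w : TrtSeq p t → ℝ}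

/-- Every treatment has replication `1 / t` in every period: the first half of pseudo symmetry. -/
def IsEquireplicated (w : TrtSeq p t → ℝ) : Prop :=
  ∀ (k : Fin p) (i : Fin t),
    (∑ s ∈ Finset.univ.filter fun s : TrtSeq p t => s k = i, w s) = 1 / (t : ℝ)

lemma IsEquireplicated.exists_sum_smul_Gmat_eq (h : IsEquireplicated w) (i : Fin 2) :
    ∃ c : Fin p → ℝ, ∑ s, w s • Gmat i s = vecMulVec c 1 := by
  have hrow : ∀ k, ∃ c, ∀ a, ∑ s, w s * Gmat i s k a = c := by
    intro k
    by_cases hi : i = 0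
    · refine ⟨1 / t, fun a => ?_⟩
      rw [← h k a, Finset.sum_filter]
      simp [Gmat, hi, Tmat]
    · by_cases hk : (k : ℕ) = 0
      · exact ⟨0, fun a => by simp [Gmat, hi, Fmat, hk]⟩
      · refine ⟨1 / t, fun a => ?_⟩
        rw [← h ⟨(k : ℕ) - 1, Nat.lt_of_le_of_lt (Nat.sub_le _ _) k.isLt⟩ a, Finset.sum_filter]
        simp [Gmat, hi, Fmat, hk]
  choose c hc using hrow
  refine ⟨c, ?_⟩
  ext k a
  simp [Matrix.sum_apply, Matrix.vecMulVec_apply, hc]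

lemma IsEquireplicated.centeredMean_eq_zero (h : IsEquireplicated w) (i : Fin 2) :
    centeredMean w i = 0 := by
  obtain ⟨c, hc⟩ := h.exists_sum_smul_Gmat_eq i
  calc centeredMean w i = (∑ s, w s • Gmat i s) * Bmat t := by
        simp only [centeredMean, Matrix.sum_mul, Matrix.smul_mul]
    _ = vecMulVec c ((Bmat t)ᵀ *ᵥ 1) := by
        rw [hc, Matrix.vecMulVec_mul, Matrix.mulVec_transpose]
    _ = 0 := by
        ext k a
        simp [Bmat_transpose, Bmat_mulVec_one, Matrix.vecMulVec_apply]

lemma IsEquireplicated.CD_eq_ChatD (h : IsEquireplicated w) (n : ℕ)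
    (S : Matrix (Fin p) (Fin p) ℝ) (i j : Fin 2) : CD n S w i j = ChatD n S w i j := by
  rw [CD_eq_ChatD_sub, h.centeredMean_eq_zero j, Matrix.mul_zero, smul_zero, sub_zero]

end Equireplicated

namespace IsPseudoSymmetric

variable {p t n : ℕ} {S : Matrix (Fin p) (Fin p) ℝ} {w : TrtSeq p t → ℝ}

lemma isEquireplicated (h : IsPseudoSymmetric n S w) : IsEquireplicated w := h.1

lemma CD_eq_smul_Bmat (h : IsPseudoSymmetric n S w) (i j : Fin 2) :
    CD n S w i j = (cD n S w i j / ((t : ℝ) - 1)) • Bmat t := by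
  obtain ⟨a, b, hab⟩ := h.2 i j
  rw [cD, ← h.isEquireplicated.CD_eq_ChatD]
  exact eq_smul_Bmat_of_mulVec_one hab (CD_mulVec_one n w i j)

lemma CD_mulVec (h : IsPseudoSymmetric n S w) {τ : Fin t → ℝ} (hsum : ∑ i, τ i = 0)
    (i j : Fin 2) : CD n S w i j *ᵥ τ = (cD n S w i j / ((t : ℝ) - 1)) • τ := by
  rw [h.CD_eq_smul_Bmat, Matrix.smul_mulVec, Bmat_mulVec_of_sum_eq_zero hsum]

lemma trace_infoKnown_eq (h : IsPseudoSymmetric n S w) (hS : (Btil S).IsSymm) (z : ℝ) :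
    (infoKnown n S w z).trace = n * qD S w z := by
  simp [trace_infoKnown n w hS, h.isEquireplicated.centeredMean_eq_zero]

lemma dotProduct_CD_mulVec_pos (h : IsPseudoSymmetric n S w) (hc : 0 < cD n S w 1 1)
    {τ : Fin t → ℝ} (hsum : ∑ i, τ i = 0) (hne : τ ≠ 0) : 0 < τ ⬝ᵥ (CD n S w 1 1 *ᵥ τ) := by
  have ht1 : (0 : ℝ) < (t : ℝ) - 1 :=
    sub_pos.2 (by exact_mod_cast two_le_of_sum_eq_zero hsum hne)
  rw [h.CD_mulVec hsum, dotProduct_smul, smul_eq_mul]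
  exact mul_pos (div_pos hc ht1) (by simpa using dotProduct_star_self_pos_iff.2 hne)

lemma PhiT_CInfo_eq (h : IsPseudoSymmetric n S w) (hS : (Btil S).IsSymm)
    (hc : cD n S w 1 1 ≠ 0) (l : ℝ) {τ : Fin t → ℝ} (hsum : ∑ i, τ i = 0) (hne : τ ≠ 0) :
    PhiT (CInfo n S w τ l) =
      n * (qD S w (xD n S w) + ((t : ℝ) - 2) * qD S w l) / ((t : ℝ) - 1) ^ 2 := by
  have ht1 : (t : ℝ) - 1 ≠ 0 :=
    (sub_pos.2 (by exact_mod_cast two_le_of_sum_eq_zero hsum hne)).ne'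
  have hττ : τ ⬝ᵥ τ ≠ 0 := dotProduct_self_eq_zero.not.2 hne
  have hloss : (τ ⬝ᵥ (CD n S w 1 1 *ᵥ τ))⁻¹ * (((CD n S w 0 1 + l • CD n S w 1 1) *ᵥ τ) ⬝ᵥ
      ((CD n S w 0 1 + l • CD n S w 1 1) *ᵥ τ)) =
        (n * qD S w l - n * qD S w (xD n S w)) / ((t : ℝ) - 1) := by
    rw [natCast_mul_qD_eq_add_sq hc l, add_sub_cancel_left]
    simp only [Matrix.add_mulVec, Matrix.smul_mulVec, h.CD_mulVec hsum, smul_smul, ← add_smul,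
      smul_dotProduct, dotProduct_smul, smul_eq_mul]
    field_simp
  rw [PhiT, trace_CInfo n w hS, hloss, h.trace_infoKnown_eq hS]
  field_simp
  ring

variable {g : Measure (Fin t → ℝ)} (hg : IsExchangeablePrior g)

include hg

lemma PhiT_CInfo_ae_eq (h : IsPseudoSymmetric n S w) (hS : (Btil S).IsSymm)
    (hc : cD n S w 1 1 ≠ 0) (l : ℝ) : (fun τ => PhiT (CInfo n S w τ l)) =ᵐ[g] fun _ =>
      n * (qD S w (xD n S w) + ((t : ℝ) - 2) * qD S w l) / ((t : ℝ) - 1) ^ 2 := by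
  filter_upwards [hg.ae_sum_eq_zero_and_ne_zero] with τ hτ
  exact h.PhiT_CInfo_eq hS hc l hτ.1 hτ.2

lemma phiAdmissible (h : IsPseudoSymmetric n S w) (hw : IsDesign w) (hS : (Btil S).IsSymm)
    (hc : 0 < cD n S w 1 1) (l : ℝ) : PhiAdmissible n S PhiT g l w := by
  have := hg.1
  refine ⟨hw, ?_, (integrable_const _).congr (h.PhiT_CInfo_ae_eq hg hS hc.ne' l).symm⟩
  filter_upwards [hg.ae_sum_eq_zero_and_ne_zero] with τ hτ
  exact h.dotProduct_CD_mulVec_pos hc hτ.1 hτ.2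

lemma PhiCrit_PhiT_eq (h : IsPseudoSymmetric n S w) (hS : (Btil S).IsSymm)
    (hc : cD n S w 1 1 ≠ 0) (l : ℝ) : PhiCrit n S PhiT g l w =
      n * (qD S w (xD n S w) + ((t : ℝ) - 2) * qD S w l) / ((t : ℝ) - 1) ^ 2 := by
  have := hg.1
  rw [PhiCrit, integral_congr_ae (h.PhiT_CInfo_ae_eq hg hS hc l), integral_const, probReal_univ,
    one_smul]

end IsPseudoSymmetric

/-! ### Symmetrization -/

section Symmetrization

variable {p t : ℕ}

lemma sum_permSeq {M : Type*} [AddCommMonoid M] (σ : Equiv.Perm (Fin t)) (F : TrtSeq p t → M) :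
    ∑ s, F (permSeq σ s) = ∑ s, F s :=
  Equiv.sum_comp (Equiv.piCongrRight fun _ => σ) F

lemma permSeq_mul (σ π : Equiv.Perm (Fin t)) (s : TrtSeq p t) :
    permSeq (σ * π) s = permSeq σ (permSeq π s) := rfl

lemma permSeq_inv_permSeq (σ : Equiv.Perm (Fin t)) (s : TrtSeq p t) :
    permSeq σ⁻¹ (permSeq σ s) = s :=
  funext fun k => σ.symm_apply_apply (s k)

lemma Gmat_permSeq_submatrix (σ : Equiv.Perm (Fin t)) (s : TrtSeq p t) (i : Fin 2) :
    (Gmat i (permSeq σ s)).submatrix id σ = Gmat i s := by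
  ext k a
  by_cases hi : i = 0 <;> simp [Gmat, Tmat, Fmat, permSeq, hi]

lemma Gmat_mul_Bmat_permSeq_submatrix (σ : Equiv.Perm (Fin t)) (s : TrtSeq p t) (i : Fin 2) :
    (Gmat i (permSeq σ s) * Bmat t).submatrix id σ = Gmat i s * Bmat t := by
  rw [← Matrix.submatrix_mul_equiv _ _ _ σ, Gmat_permSeq_submatrix, Bmat_submatrix_perm]

lemma Chat_permSeq_submatrix (S : Matrix (Fin p) (Fin p) ℝ) (σ : Equiv.Perm (Fin t))
    (s : TrtSeq p t) (i j : Fin 2) :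
    (Chat S (permSeq σ s) i j).submatrix σ σ = Chat S s i j := by
  rw [Chat_eq_transpose_mul_mul, Chat_eq_transpose_mul_mul,
    ← Gmat_mul_Bmat_permSeq_submatrix σ s i, ← Gmat_mul_Bmat_permSeq_submatrix σ s j]
  rfl

lemma cseq_permSeq (S : Matrix (Fin p) (Fin p) ℝ) (σ : Equiv.Perm (Fin t)) (s : TrtSeq p t)
    (i j : Fin 2) : cseq S (permSeq σ s) i j = cseq S s i j := by
  rw [cseq, cseq, ← Chat_permSeq_submatrix S σ s]
  exact (Equiv.sum_comp σ _).symm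

lemma qSeq_permSeq (S : Matrix (Fin p) (Fin p) ℝ) (σ : Equiv.Perm (Fin t)) (s : TrtSeq p t)
    (x : ℝ) : qSeq S (permSeq σ s) x = qSeq S s x := by
  simp only [qSeq, cseq_permSeq]

lemma IsSymmetricDesign.ChatD_submatrix_perm {w : TrtSeq p t → ℝ} (hsym : IsSymmetricDesign w)
    (n : ℕ) (S : Matrix (Fin p) (Fin p) ℝ) (i j : Fin 2) (σ : Equiv.Perm (Fin t)) :
    (ChatD n S w i j).submatrix σ σ = ChatD n S w i j := by
  ext a b
  simp only [ChatD, Matrix.submatrix_apply, Matrix.smul_apply, Matrix.sum_apply]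
  congr 1
  refine (sum_permSeq σ _).symm.trans (Finset.sum_congr rfl fun s _ => ?_)
  rw [hsym σ, ← Chat_permSeq_submatrix S σ s, Matrix.submatrix_apply]

lemma IsSymmetricDesign.isEquireplicated {w : TrtSeq p t → ℝ} (hsym : IsSymmetricDesign w)
    (hw : IsDesign w) : IsEquireplicated w := by
  intro k i
  have hconst : ∀ j, ∑ s with s k = j, w s = ∑ s with s k = i, w s := fun j => by
    simp only [Finset.sum_filter]
    rw [← sum_permSeq (Equiv.swap i j)]
    simp only [hsym (Equiv.swap i j), permSeq, Equiv.swap_apply_eq_iff, Equiv.swap_apply_right]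
  have ht : (t : ℝ) ≠ 0 := Nat.cast_ne_zero.2 i.pos.ne'
  have hsum : (t : ℝ) * ∑ s with s k = i, w s = 1 := by
    rw [← hw.2, ← Finset.sum_fiberwise Finset.univ (fun s : TrtSeq p t => s k) w]
    simp [hconst]
  rw [eq_div_iff ht, mul_comm, hsum]

lemma IsSymmetricDesign.isPseudoSymmetric {w : TrtSeq p t → ℝ} (hsym : IsSymmetricDesign w)
    (hw : IsDesign w) (n : ℕ) (S : Matrix (Fin p) (Fin p) ℝ) : IsPseudoSymmetric n S w := by
  have hrep := hsym.isEquireplicated hw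
  refine ⟨hrep, fun i j => ?_⟩
  rw [hrep.CD_eq_ChatD]
  exact exists_eq_smul_one_add_of_submatrix_perm (hsym.ChatD_submatrix_perm n S i j)

lemma isSymmetricDesign_symmetrize (w : TrtSeq p t → ℝ) : IsSymmetricDesign (symmetrize w) := by
  intro π s
  rw [symmetrize, symmetrize, ← Equiv.sum_comp (Equiv.mulLeft π)]
  simp only [Equiv.coe_mulLeft, permDesign, _root_.mul_inv_rev, permSeq_mul, permSeq_inv_permSeq]

lemma sum_symmetrize_mul (w : TrtSeq p t → ℝ) {F : TrtSeq p t → ℝ}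
    (hF : ∀ σ s, F (permSeq σ s) = F s) :
    ∑ s, symmetrize w s * F s = ∑ s, w s * F s := by
  have hperm : ∀ σ : Equiv.Perm (Fin t), ∑ s, permDesign σ w s * F s = ∑ s, w s * F s :=
    fun σ => by
      rw [← sum_permSeq σ]
      simp only [permDesign, permSeq_inv_permSeq, hF]
  simp only [symmetrize, mul_assoc, Finset.sum_mul, ← Finset.mul_sum]
  rw [Finset.sum_comm]
  simp [hperm, Fintype.card_perm, Nat.factorial_ne_zero]

lemma isDesign_symmetrize {w : TrtSeq p t → ℝ} (hw : IsDesign w) : IsDesign (symmetrize w) := by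
  refine ⟨fun s => mul_nonneg (by positivity) (Finset.sum_nonneg fun σ _ => hw.1 _), ?_⟩
  simpa only [mul_one, hw.2] using sum_symmetrize_mul w (F := fun _ => 1) fun _ _ => rfl

lemma qD_symmetrize (S : Matrix (Fin p) (Fin p) ℝ) (w : TrtSeq p t → ℝ) (x : ℝ) :
    qD S (symmetrize w) x = qD S w x :=
  sum_symmetrize_mul w fun σ s => qSeq_permSeq S σ s x

end Symmetrization

/-! ### Mixtures of designs -/

section Mixture

variable {p t : ℕ} (n : ℕ) (S : Matrix (Fin p) (Fin p) ℝ) (w u : TrtSeq p t → ℝ) (a b : ℝ)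

lemma ChatD_add_smul (i j : Fin 2) :
    ChatD n S (a • w + b • u) i j = a • ChatD n S w i j + b • ChatD n S u i j := by
  simp only [ChatD, Pi.add_apply, Pi.smul_apply, smul_eq_mul, add_smul, mul_smul,
    Finset.sum_add_distrib, ← Finset.smul_sum, smul_add, smul_comm (n : ℝ)]

lemma cD_add_smul (i j : Fin 2) :
    cD n S (a • w + b • u) i j = a * cD n S w i j + b * cD n S u i j := by
  simp only [cD, ChatD_add_smul, Matrix.trace_add, Matrix.trace_smul, smul_eq_mul]

lemma qD_add_smul (x : ℝ) : qD S (a • w + b • u) x = a * qD S w x + b * qD S u x := by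
  simp only [qD, Pi.add_apply, Pi.smul_apply, smul_eq_mul, add_mul, mul_assoc,
    Finset.sum_add_distrib, Finset.mul_sum]

variable {n S w u a b}

lemma IsPseudoSymmetric.add_smul (hw : IsPseudoSymmetric n S w) (hu : IsPseudoSymmetric n S u)
    (hab : a + b = 1) : IsPseudoSymmetric n S (a • w + b • u) := by
  have hrep : IsEquireplicated (a • w + b • u) := fun k i => by
    simp only [Pi.add_apply, Pi.smul_apply, Finset.sum_add_distrib, ← Finset.smul_sum, hw.1 k i,
      hu.1 k i, ← _root_.add_smul, hab, one_smul]
  refine ⟨hrep, fun i j => ?_⟩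
  obtain ⟨a₁, b₁, h₁⟩ := hw.2 i j
  obtain ⟨a₂, b₂, h₂⟩ := hu.2 i j
  refine ⟨a * a₁ + b * a₂, a * b₁ + b * b₂, ?_⟩
  rw [hrep.CD_eq_ChatD, ChatD_add_smul, ← hw.isEquireplicated.CD_eq_ChatD,
    ← hu.isEquireplicated.CD_eq_ChatD, h₁, h₂]
  module

end Mixture

/-! ### Convex weights on a finite set -/

section ConvexWeights

variable {ι : Type*} [Fintype ι] {w f : ι → ℝ} {c : ℝ}

lemma sum_mul_le_of_mem_stdSimplex (hw : w ∈ stdSimplex ℝ ι) (hf : ∀ i, f i ≤ c) :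
    ∑ i, w i * f i ≤ c :=
  calc ∑ i, w i * f i ≤ ∑ i, w i * c :=
        Finset.sum_le_sum fun i _ => mul_le_mul_of_nonneg_left (hf i) (hw.1 i)
    _ = c := by rw [← Finset.sum_mul, hw.2, one_mul]

lemma eq_sum_mul_of_forall_le (hw : w ∈ stdSimplex ℝ ι) (hf : ∀ i, f i ≤ ∑ j, w j * f j) {i : ι}
    (hi : 0 < w i) : f i = ∑ j, w j * f j := by
  have hnonneg : ∀ k ∈ Finset.univ, 0 ≤ w k * (∑ j, w j * f j - f k) := fun k _ =>
    mul_nonneg (hw.1 k) (sub_nonneg.2 (hf k))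
  have hsum : ∑ k, w k * (∑ j, w j * f j - f k) = 0 := by
    simp only [mul_sub, Finset.sum_sub_distrib, ← Finset.sum_mul, hw.2, one_mul, sub_self]
  have hzero := (Finset.sum_eq_zero_iff_of_nonneg hnonneg).1 hsum i (Finset.mem_univ i)
  linarith [(mul_eq_zero.1 hzero).resolve_left hi.ne']

lemma sSup_range_div_sum_mul_eq_one_iff (hw : w ∈ stdSimplex ℝ ι) (hpos : 0 < ∑ j, w j * f j) :
    sSup (Set.range fun i => f i / ∑ j, w j * f j) = 1 ↔ ∀ i, f i ≤ ∑ j, w j * f j := by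
  refine ⟨fun h i => (div_le_one hpos).1 ?_, fun h => ?_⟩
  · rw [← h]
    exact le_csSup (Set.finite_range _).bddAbove (Set.mem_range_self i)
  · obtain ⟨i, -, hi⟩ : ∃ i ∈ Finset.univ, 0 < w i :=
      Finset.exists_lt_of_sum_lt (by simp [hw.2])
    refine IsGreatest.csSup_eq ⟨⟨i, ?_⟩, ?_⟩
    · exact (div_eq_one_iff_eq hpos.ne').2 (eq_sum_mul_of_forall_le hw h hi)
    · rintro _ ⟨k, rfl⟩
      exact (div_le_one hpos).2 (h k)

end ConvexWeights

/-! ### The equivalence theorem -/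

section Equivalence

variable {p t n : ℕ} {S : Matrix (Fin p) (Fin p) ℝ} {g : Measure (Fin t → ℝ)}
  {w : TrtSeq p t → ℝ} {l : ℝ}

/-- The contribution `q_s(x) + (t - 2) q_s(λ)` of the sequence `s` to the upper bound for the
T-criterion with carryover proportion `λ` and completing-the-square parameter `x`. -/
def tScore (S : Matrix (Fin p) (Fin p) ℝ) (l x : ℝ) (s : TrtSeq p t) : ℝ :=
  qSeq S s x + ((t : ℝ) - 2) * qSeq S s l

lemma sum_mul_tScore (S : Matrix (Fin p) (Fin p) ℝ) (w : TrtSeq p t → ℝ) (l x : ℝ) :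
    ∑ s, w s * tScore S l x s = qD S w x + ((t : ℝ) - 2) * qD S w l := by
  simp only [tScore, qD, mul_add, Finset.sum_add_distrib, Finset.mul_sum, mul_left_comm]

lemma continuous_tScore (S : Matrix (Fin p) (Fin p) ℝ) (l : ℝ) (s : TrtSeq p t) :
    Continuous fun x => tScore S l x s := by
  unfold tScore qSeq
  fun_prop

lemma isDesign_single (s : TrtSeq p t) : IsDesign (Pi.single s (1 : ℝ)) :=
  single_mem_stdSimplex ℝ s

lemma qD_single (S : Matrix (Fin p) (Fin p) ℝ) (s : TrtSeq p t) (x : ℝ) :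
    qD S (Pi.single s 1) x = qSeq S s x := by
  simp [qD, Pi.single_apply]

lemma tendsto_cD_mix (n : ℕ) (S : Matrix (Fin p) (Fin p) ℝ) (w u : TrtSeq p t → ℝ)
    (i j : Fin 2) :
    Filter.Tendsto (fun e : ℝ => cD n S ((1 - e) • w + e • u) i j) (nhdsWithin 0 (Set.Ioi 0))
      (nhds (cD n S w i j)) := by
  simp only [cD_add_smul]
  refine Filter.Tendsto.mono_left ?_ nhdsWithin_le_nhds
  exact Continuous.tendsto' (by fun_prop) _ _ (by simp)

lemma PhiOptimal.tScore_mix_le (hopt : PhiOptimal n S PhiT g l w) (hg : IsExchangeablePrior g)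
    (hS : (Btil S).IsSymm) (hw : IsDesign w) (hps : IsPseudoSymmetric n S w)
    (hc : 0 < cD n S w 1 1) (s : TrtSeq p t) {e : ℝ} (he₀ : 0 < e) (he₁ : e ≤ 1)
    (hce : 0 < cD n S ((1 - e) • w + e • symmetrize (Pi.single s 1)) 1 1) :
    tScore S l (xD n S ((1 - e) • w + e • symmetrize (Pi.single s 1))) s ≤
      qD S w (xD n S w) + ((t : ℝ) - 2) * qD S w l := by
  set u := symmetrize (Pi.single s (1 : ℝ)) with hu
  set v := (1 - e) • w + e • u with hv
  have hu_design : IsDesign u := isDesign_symmetrize (isDesign_single s)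
  have hv_design : IsDesign v :=
    convex_stdSimplex ℝ (TrtSeq p t) hw hu_design (sub_nonneg.2 he₁) he₀.le (sub_add_cancel 1 e)
  have hv_ps : IsPseudoSymmetric n S v :=
    hps.add_smul ((isSymmetricDesign_symmetrize _).isPseudoSymmetric hu_design n S)
      (sub_add_cancel 1 e)
  have ht : (0 : ℝ) < (t : ℝ) - 1 := sub_pos.2 (by exact_mod_cast hg.two_le)
  have hcrit : qD S v (xD n S v) + ((t : ℝ) - 2) * qD S v l ≤
      qD S w (xD n S w) + ((t : ℝ) - 2) * qD S w l := by
    have := hopt v (hv_ps.phiAdmissible hg hv_design hS hce l)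
    rw [hv_ps.PhiCrit_PhiT_eq hg hS hce.ne', hps.PhiCrit_PhiT_eq hg hS hc.ne',
      div_le_div_iff_of_pos_right (by positivity)] at this
    exact le_of_mul_le_mul_left this (natCast_pos_of_cD_pos hc)
  have hmix : ∀ y, qD S v y = (1 - e) * qD S w y + e * qSeq S s y := fun y => by
    rw [hv, qD_add_smul, hu, qD_symmetrize, qD_single]
  have hmin := qD_xD_le hc (xD n S v)
  rw [hmix, hmix] at hcrit
  refine le_of_mul_le_mul_left ?_ he₀
  rw [tScore]
  nlinarith [mul_le_mul_of_nonneg_left hmin (sub_nonneg.2 he₁)]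

lemma PhiOptimal.tScore_le (hopt : PhiOptimal n S PhiT g l w) (hg : IsExchangeablePrior g)
    (hS : (Btil S).IsSymm) (hw : IsDesign w) (hps : IsPseudoSymmetric n S w)
    (hc : 0 < cD n S w 1 1) (s : TrtSeq p t) :
    tScore S l (xD n S w) s ≤ qD S w (xD n S w) + ((t : ℝ) - 2) * qD S w l := by
  have hcD := tendsto_cD_mix n S w (symmetrize (Pi.single s 1))
  have hxD := (hcD 0 1).neg.div (hcD 1 1) hc.ne'
  refine le_of_tendsto (((continuous_tScore S l s).tendsto _).comp hxD) ?_
  filter_upwards [(hcD 1 1).eventually_const_lt hc, Ioc_mem_nhdsGT one_pos] with e hce he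
  exact hopt.tScore_mix_le hg hS hw hps hc s he.1 he.2 hce

lemma phiOptimal_of_forall_tScore_le (hg : IsExchangeablePrior g) (hS : (Btil S).PosSemidef)
    (hps : IsPseudoSymmetric n S w) (hc : 0 < cD n S w 1 1)
    (h : ∀ s : TrtSeq p t, tScore S l (xD n S w) s ≤
      qD S w (xD n S w) + ((t : ℝ) - 2) * qD S w l) :
    PhiOptimal n S PhiT g l w := by
  intro w' hw'
  have havg := sum_mul_le_of_mem_stdSimplex hw'.1 h
  rw [sum_mul_tScore] at havg
  calc PhiCrit n S PhiT g l w'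
      ≤ n * (qD S w' (xD n S w) + ((t : ℝ) - 2) * qD S w' l) / ((t : ℝ) - 1) ^ 2 :=
        hg.PhiCrit_PhiT_le hS hw' (xD n S w)
    _ ≤ n * (qD S w (xD n S w) + ((t : ℝ) - 2) * qD S w l) / ((t : ℝ) - 1) ^ 2 := by
        gcongr ?_ / _
        exact mul_le_mul_of_nonneg_left havg n.cast_nonneg
    _ = PhiCrit n S PhiT g l w := (hps.PhiCrit_PhiT_eq hg hS.isHermitian hc.ne' l).symm

lemma phiOptimal_iff_forall_tScore_le (hg : IsExchangeablePrior g) (hS : (Btil S).PosSemidef)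
    (hw : IsDesign w) (hps : IsPseudoSymmetric n S w) (hc : 0 < cD n S w 1 1) :
    PhiOptimal n S PhiT g l w ↔ ∀ s : TrtSeq p t, tScore S l (xD n S w) s ≤
      qD S w (xD n S w) + ((t : ℝ) - 2) * qD S w l :=
  ⟨fun hopt => hopt.tScore_le hg hS.isHermitian hw hps hc,
    phiOptimal_of_forall_tScore_le hg hS hps hc⟩

end Equivalence

theorem stmt15_general {p t n : ℕ} {S : Matrix (Fin p) (Fin p) ℝ} (hS : (Btil S).PosSemidef)
    (l0 : ℝ) {g : Measure (Fin t → ℝ)} (hg : IsExchangeablePrior g)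
    {w : TrtSeq p t → ℝ} (hw : IsDesign w) (hps : IsPseudoSymmetric n S w)
    (hc22 : 0 < cD n S w 1 1)
    (hq : 0 < qD S w (xD n S w) + ((t : ℝ) - 2) * qD S w l0) :
    (PhiOptimal n S PhiT g l0 w ↔
      sSup (Set.range fun s : TrtSeq p t =>
        (qSeq S s (xD n S w) + ((t : ℝ) - 2) * qSeq S s l0) /
          (qD S w (xD n S w) + ((t : ℝ) - 2) * qD S w l0)) = 1) ∧
    (PhiOptimal n S PhiT g l0 w → ∀ s : TrtSeq p t, 0 < w s →
      (qSeq S s (xD n S w) + ((t : ℝ) - 2) * qSeq S s l0) /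
        (qD S w (xD n S w) + ((t : ℝ) - 2) * qD S w l0) = 1) := by
  have hopt := phiOptimal_iff_forall_tScore_le (l := l0) hg hS hw hps hc22
  rw [← sum_mul_tScore S w l0] at hopt hq ⊢
  refine ⟨hopt.trans (sSup_range_div_sum_mul_eq_one_iff hw hq).symm, fun h s hs => ?_⟩
  exact (div_eq_one_iff_eq hq.ne').2 (eq_sum_mul_of_forall_le hw (hopt.1 h) hs)

/-- equivalence theorem for the T-criterion. -/
theorem stmt15 (p t n : ℕ) (hp : 2 ≤ p) (ht : 3 ≤ t) (hn : 1 ≤ n)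
    (S : Matrix (Fin p) (Fin p) ℝ) (hS : S.PosDef)
    (l0 : ℝ) (g : Measure (Fin t → ℝ)) (hg : IsExchangeablePrior g)
    (w : TrtSeq p t → ℝ) (hw : IsDesign w) (hps : IsPseudoSymmetric n S w)
    (hc22 : 0 < cD n S w 1 1)
    (hq : 0 < qD S w (xD n S w) + ((t : ℝ) - 2) * qD S w l0) :
    (PhiOptimal n S PhiT g l0 w ↔
      sSup (Set.range fun s : TrtSeq p t =>
        (qSeq S s (xD n S w) + ((t : ℝ) - 2) * qSeq S s l0) /
          (qD S w (xD n S w) + ((t : ℝ) - 2) * qD S w l0)) = 1) ∧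
    (PhiOptimal n S PhiT g l0 w → ∀ s : TrtSeq p t, 0 < w s →
      (qSeq S s (xD n S w) + ((t : ℝ) - 2) * qSeq S s l0) /
        (qD S w (xD n S w) + ((t : ℝ) - 2) * qD S w l0) = 1) :=
  stmt15_general (Btil_posSemidef hS.posSemidef) l0 hg hw hps hc22 hq
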